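/- arXiv:1212.5186 — 9 statements merged into one kernel-verified Lean document; each statement's English description precedes it below -/
import Mathlib

section
/- Let N ≥ 1 be a natural number and let x_0, x_1, …, x_N be nonnegative real numbers. Suppose there is a constant γ with 0 < γ < 1/2 such that x_k ≤ γ·(x_{k-1} + x_{k+1}) for all 1 ≤ k ≤ N−1. Set ξ := (1 + √(1 − 4γ²))/(2γ). Then x_k ≤ x_0·ξ^{−k} + x_N·ξ^{−(N−k)} for all 0 ≤ k ≤ N. -/
/-! The claim is a discrete maximum principle. With `r = ξ⁻¹` one has `γ (1 + r²) = r`, so the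
right-hand side `y k = x 0 * r ^ k + x N * r ^ (N - k)` satisfies `y k = γ (y (k-1) + y (k+1))`
at interior indices and dominates `x` at both endpoints. The difference `d = x - y` then satisfies
`d k ≤ γ (d (k-1) + d (k+1))`, and since `2γ < 1` a positive maximum of `d` cannot occur at an
interior index. -/

/-- Discrete maximum principle: for `0 < 2γ < 1`, a subsolution of `d k = γ (d (k-1) + d (k+1))` that is nonpositive at both
endpoints is nonpositive on `0, …, N`. -/
lemma nonpos_of_subsolution (N : ℕ) (d : ℕ → ℝ) (γ : ℝ) (hγ0 : 0 < γ) (hγ : γ < 1 / 2)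
    (h0 : d 0 ≤ 0) (hN : d N ≤ 0)
    (hrec : ∀ k, 1 ≤ k → k ≤ N - 1 → d k ≤ γ * (d (k - 1) + d (k + 1))) :
    ∀ k, k ≤ N → d k ≤ 0 := by
  obtain ⟨m, hm, hmax⟩ := Finset.exists_max_image (Finset.range (N + 1)) d ⟨0, by simp⟩
  simp only [Finset.mem_range, Nat.lt_succ_iff] at hm hmax
  suffices hdm : d m ≤ 0 from fun k hk => (hmax k hk).trans hdm
  by_contra! hpos
  have hm0 : m ≠ 0 := by rintro rfl; linarith
  have hmN : m ≠ N := by rintro rfl; linarith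
  have h1 := hrec m (by omega) (by omega)
  have h2 := hmax (m - 1) (by omega)
  have h3 := hmax (m + 1) (by omega)
  have h4 : γ * (d (m - 1) + d (m + 1)) ≤ γ * (d m + d m) := by gcongr
  nlinarith

lemma inv_root_pos_and_eq (γ : ℝ) (hγ0 : 0 < γ) (hγ : γ < 1 / 2) :
    0 < ((1 + Real.sqrt (1 - 4 * γ ^ 2)) / (2 * γ))⁻¹ ∧
      γ * (1 + ((1 + Real.sqrt (1 - 4 * γ ^ 2)) / (2 * γ))⁻¹ ^ 2)
        = ((1 + Real.sqrt (1 - 4 * γ ^ 2)) / (2 * γ))⁻¹ := by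
  have hs := Real.sqrt_nonneg (1 - 4 * γ ^ 2)
  have hsq : Real.sqrt (1 - 4 * γ ^ 2) ^ 2 = 1 - 4 * γ ^ 2 := Real.sq_sqrt (by nlinarith)
  generalize Real.sqrt (1 - 4 * γ ^ 2) = s at hs hsq ⊢
  have hs1 : 0 < 1 + s := by linarith
  refine ⟨by positivity, ?_⟩
  rw [inv_div]
  field_simp
  linear_combination hsq

/-- Three-interval lemma (Lemma 7.1): if a finite sequence of nonnegative reals
satisfies `x k ≤ γ (x (k-1) + x (k+1))` for `1 ≤ k ≤ N-1` with `0 < γ < 1/2`,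
then `x k ≤ x 0 * ξ⁻¹ ^ k + x N * ξ⁻¹ ^ (N - k)` where
`ξ = (1 + √(1 - 4γ²)) / (2γ)`. -/
theorem three_interval_lemma (N : ℕ) (hN : 1 ≤ N) (x : ℕ → ℝ)
    (hx : ∀ k, k ≤ N → 0 ≤ x k)
    (γ : ℝ) (hγ0 : 0 < γ) (hγ : γ < 1 / 2)
    (hrec : ∀ k, 1 ≤ k → k ≤ N - 1 → x k ≤ γ * (x (k - 1) + x (k + 1))) :
    ∀ k, k ≤ N →
      x k ≤ x 0 * ((1 + Real.sqrt (1 - 4 * γ ^ 2)) / (2 * γ))⁻¹ ^ k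
            + x N * ((1 + Real.sqrt (1 - 4 * γ ^ 2)) / (2 * γ))⁻¹ ^ (N - k) := by
  obtain ⟨hr, hroot⟩ := inv_root_pos_and_eq γ hγ0 hγ
  generalize ((1 + Real.sqrt (1 - 4 * γ ^ 2)) / (2 * γ))⁻¹ = r at hr hroot ⊢
  have hx0 := hx 0 (Nat.zero_le N)
  have hxN := hx N le_rfl
  have key := nonpos_of_subsolution N (fun k => x k - (x 0 * r ^ k + x N * r ^ (N - k)))
    γ hγ0 hγ ?_ ?_ ?_
  · exact fun k hk => sub_nonpos.mp (key k hk)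
  · have : 0 ≤ x N * r ^ N := by positivity
    simpa using this
  · have : 0 ≤ x 0 * r ^ N := by positivity
    simpa using this
  · intro k hk1 hkN
    have h := hrec k hk1 hkN
    -- Write `k = a + 1` and `N = a + b + 2` to remove the truncated subtractions.
    obtain ⟨a, rfl⟩ : ∃ a, k = a + 1 := ⟨k - 1, by omega⟩
    obtain ⟨b, hb⟩ : ∃ b, N = a + b + 2 := ⟨N - a - 2, by omega⟩
    have e1 : N - (a + 1) = b + 1 := by omega
    have e2 : N - a = b + 2 := by omega
    have e3 : N - (a + 1 + 1) = b := by omega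
    simp only [Nat.add_sub_cancel, e1, e2, e3] at h ⊢
    linear_combination h + (x 0 * r ^ a + x N * r ^ b) * hroot
end

section
/- Let N ≥ 1 be a natural number, c > 0, and let x_0, x_1, …, x_N be nonnegative real numbers satisfying x_k ≤ γ(c)·(x_{k-1} + x_{k+1}) for all 1 ≤ k ≤ N−1, where γ(r) := 1/(e^r + e^{−r}). Then x_k ≤ x_0·e^{−ck} + x_N·e^{−c(N−k)} for all 0 ≤ k ≤ N. -/
/-!
The right-hand side `y k = x 0 * e^{-ck} + x N * e^{-c(N-k)}` solves the recurrence with equality: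
`(e^c + e^{-c}) * y k = y (k-1) + y (k+1)`. Hence `d = x - y` still satisfies the inequality
`(e^c + e^{-c}) * d k ≤ d (k-1) + d (k+1)` at interior points, and nonnegativity of `x 0` and `x N`
gives `d 0 ≤ 0` and `d N ≤ 0`. Since `e^c + e^{-c} > 2`, the discrete maximum principle
(`nonpos_of_mul_le_add`) yields `d ≤ 0` throughout.
-/

/-- Discrete maximum principle: if `S * d k ≤ d (k - 1) + d (k + 1)` in the interior of `[0, N]`
with `S > 2`, and `d ≤ 0` at both ends, then `d ≤ 0`. A positive maximum `M` would be attained at an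
interior point, where `S * M ≤ 2 * M`. -/
lemma nonpos_of_mul_le_add {N : ℕ} {S : ℝ} (hS : 2 < S) {d : ℕ → ℝ} (h0 : d 0 ≤ 0) (hN : d N ≤ 0)
    (hd : ∀ k, 1 ≤ k → k ≤ N - 1 → S * d k ≤ d (k - 1) + d (k + 1)) {k : ℕ} (hk : k ≤ N) :
    d k ≤ 0 := by
  obtain ⟨m, hm, hmax⟩ := (Finset.range (N + 1)).exists_max_image d ⟨0, by simp⟩
  simp only [Finset.mem_range, Nat.lt_succ_iff] at hm hmax
  refine (hmax k hk).trans ?_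
  by_contra! hpos
  have hm0 : m ≠ 0 := by rintro rfl; linarith
  have hmN : m ≠ N := by rintro rfl; linarith
  have h1 := hd m (by omega) (by omega)
  have h2 := hmax (m - 1) (by omega)
  have h3 := hmax (m + 1) (by omega)
  nlinarith [mul_pos (sub_pos.2 hS) hpos]

/-- Exponential form of the three-interval lemma (Remark 7.2(1)): with
`γ(c) = 1/(e^c + e^{-c})`, a finite nonnegative sequence satisfying the
three-interval inequality decays exponentially from both ends. -/
theorem three_interval_lemma_exp (N : ℕ) (hN : 1 ≤ N) (c : ℝ) (hc : 0 < c)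
    (x : ℕ → ℝ) (hx : ∀ k, k ≤ N → 0 ≤ x k)
    (hrec : ∀ k, 1 ≤ k → k ≤ N - 1 →
      x k ≤ (1 / (Real.exp c + Real.exp (-c))) * (x (k - 1) + x (k + 1))) :
    ∀ k, k ≤ N →
      x k ≤ x 0 * Real.exp (-(c * k)) + x N * Real.exp (-(c * ((N : ℝ) - (k : ℝ)))) := by
  intro k hk
  have hS : 2 < Real.exp c + Real.exp (-c) := by
    have h1 := Real.add_one_lt_exp hc.ne'
    have h2 := Real.add_one_lt_exp (neg_ne_zero.2 hc.ne')
    linarith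
  have hx0 := hx 0 (Nat.zero_le N)
  have hxN := hx N le_rfl
  refine sub_nonpos.1 (nonpos_of_mul_le_add hS (d := fun k : ℕ => x k -
    (x 0 * Real.exp (-(c * k)) + x N * Real.exp (-(c * ((N : ℝ) - (k : ℝ)))))) ?_ ?_ ?_ hk)
  · have := mul_nonneg hxN (Real.exp_pos (-(c * N))).le
    simpa using this
  · have := mul_nonneg hx0 (Real.exp_pos (-(c * N))).le
    simpa using this
  · intro j hj1 hjN
    have h := hrec j hj1 hjN
    rw [one_div, inv_mul_eq_div, le_div_iff₀ (by linarith)] at h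
    obtain ⟨i, rfl⟩ : ∃ i, j = i + 1 := ⟨j - 1, by omega⟩
    simp only [Nat.add_sub_cancel] at h ⊢
    push_cast
    -- Express the neighbouring exponentials through the ones at the centre.
    have e1 : Real.exp (-(c * (i : ℝ))) = Real.exp (-(c * ((i : ℝ) + 1))) * Real.exp c := by
      rw [← Real.exp_add]; ring_nf
    have e2 : Real.exp (-(c * ((i : ℝ) + 1 + 1)))
        = Real.exp (-(c * ((i : ℝ) + 1))) * Real.exp (-c) := by
      rw [← Real.exp_add]; ring_nf
    have e3 : Real.exp (-(c * ((N : ℝ) - i)))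
        = Real.exp (-(c * ((N : ℝ) - (i + 1)))) * Real.exp (-c) := by
      rw [← Real.exp_add]; ring_nf
    have e4 : Real.exp (-(c * ((N : ℝ) - (i + 1 + 1))))
        = Real.exp (-(c * ((N : ℝ) - (i + 1)))) * Real.exp c := by
      rw [← Real.exp_add]; ring_nf
    rw [e1, e2, e3, e4]
    linarith
end

section
/- Let c > 0 and let x : ℕ → ℝ be a bounded sequence of nonnegative real numbers such that x_k ≤ γ(c)·(x_{k-1} + x_{k+1}) for every k ≥ 1, where γ(r) := 1/(e^r + e^{−r}). Then x_k ≤ x_0·e^{−ck} for all k ≥ 0. -/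
/-!
Put `a = e^c` and `b = e^{-c}`, so that `a * b = 1`. The recursive inequality
`(a + b) x_{k+1} ≤ x_k + x_{k+2}` factors through the first-order difference
`d_k = x_{k+1} - b x_k`: it says exactly `a d_k ≤ d_{k+1}`. If some `d_k` were positive, `d` would
grow geometrically (as `a > 1`), whereas `d` is bounded above because `x` is bounded and
nonnegative. Hence `d_k ≤ 0`, i.e. `x_{k+1} ≤ e^{-c} x_k` for all `k`, which iterates to the claim.
-/

/-- Infinite-sequence version of the three-interval lemma (Remark 7.2(2)):
a bounded nonnegative sequence satisfying `x k ≤ γ(c) (x (k-1) + x (k+1))`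
for all `k ≥ 1`, with `γ(c) = 1/(e^c + e^{-c})`, satisfies
`x k ≤ x 0 · e^{-ck}` for all `k`. -/
theorem three_interval_lemma_infinite (c : ℝ) (hc : 0 < c)
    (x : ℕ → ℝ) (hx : ∀ k, 0 ≤ x k) (hbdd : ∃ B : ℝ, ∀ k, x k ≤ B)
    (hrec : ∀ k, 1 ≤ k →
      x k ≤ (1 / (Real.exp c + Real.exp (-c))) * (x (k - 1) + x (k + 1))) :
    ∀ k : ℕ, x k ≤ x 0 * Real.exp (-(c * k)) := by
  have ha : 1 < Real.exp c := Real.one_lt_exp_iff.mpr hc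
  have hb : 0 < Real.exp (-c) := Real.exp_pos _
  have hab : Real.exp c * Real.exp (-c) = 1 := by
    rw [← Real.exp_add, add_neg_cancel, Real.exp_zero]
  obtain ⟨B, hB⟩ := hbdd
  have hd : ∀ k, Real.exp c * (x (k + 1) - Real.exp (-c) * x k)
      ≤ x (k + 2) - Real.exp (-c) * x (k + 1) := by
    intro k
    have h := hrec (k + 1) (by omega)
    rw [one_div_mul_eq_div, le_div_iff₀ (by positivity), Nat.add_sub_cancel] at h
    linear_combination h - x k * hab
  have hgrow : ∀ k n : ℕ, Real.exp c ^ n * (x (k + 1) - Real.exp (-c) * x k)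
      ≤ x (k + n + 1) - Real.exp (-c) * x (k + n) := by
    intro k n
    induction n with
    | zero => simp
    | succ n ih =>
      calc Real.exp c ^ (n + 1) * (x (k + 1) - Real.exp (-c) * x k)
          = Real.exp c * (Real.exp c ^ n * (x (k + 1) - Real.exp (-c) * x k)) := by ring
        _ ≤ Real.exp c * (x (k + n + 1) - Real.exp (-c) * x (k + n)) := by gcongr
        _ ≤ _ := hd (k + n)
  have hstep : ∀ k, x (k + 1) ≤ Real.exp (-c) * x k := by
    intro k
    by_contra! hk
    have hpos : 0 < x (k + 1) - Real.exp (-c) * x k := sub_pos.mpr hk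
    obtain ⟨n, hn⟩ := pow_unbounded_of_one_lt (B / (x (k + 1) - Real.exp (-c) * x k)) ha
    rw [div_lt_iff₀ hpos] at hn
    have h1 := hgrow k n
    have h2 := hB (k + n + 1)
    have h3 := mul_nonneg hb.le (hx (k + n))
    linarith
  intro k
  induction k with
  | zero => simp
  | succ k ih =>
    calc x (k + 1) ≤ Real.exp (-c) * x k := hstep k
      _ ≤ Real.exp (-c) * (x 0 * Real.exp (-(c * k))) := by gcongr
      _ = x 0 * Real.exp (-(c * (k + 1 : ℕ))) := by
        rw [mul_left_comm, ← Real.exp_add]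
        congr 2
        push_cast
        ring
end

section
/- For every λ > 0 and every real constant c, the function a(τ) := c·e^{−λτ} satisfies ∫₁² a(τ)² dτ = γ(2λ)·( ∫₀¹ a(τ)² dτ + ∫₂³ a(τ)² dτ ), where γ(r) := 1/(e^r + e^{−r}). -/
/-!
The squared eigenmode `a(τ)² = c² e^{-2λτ}` is an exponential, so translating the interval of
integration by `d` multiplies the integral by `e^{-2λd}` (`integral_sq_eigenmode_shift`).
With `d = -1` and `d = 1`, the integrals over `[0,1]` and `[2,3]` are `e^{2λ}` and `e^{-2λ}` times
the one over `[1,2]`, and their sum is `1 / γ(2λ)` times it. No integral needs to be evaluated.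
-/

theorem integral_sq_eigenmode_shift (lam c a b d : ℝ) :
    (∫ τ in (a + d)..(b + d), (c * Real.exp (-lam * τ)) ^ 2) =
      Real.exp (-(2 * lam * d)) * ∫ τ in a..b, (c * Real.exp (-lam * τ)) ^ 2 := by
  rw [← intervalIntegral.integral_comp_add_right, ← intervalIntegral.integral_const_mul]
  congr 1
  funext τ
  have h : Real.exp (-(2 * lam * d)) = Real.exp (-lam * d) ^ 2 := by
    rw [← Real.exp_nat_mul]
    congr 1
    push_cast
    ring
  rw [h, mul_add, Real.exp_add]
  ring

/-- The exact three-interval identity for a single exponentially decaying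
eigenmode `a(τ) = c·e^{-λτ}`: the `L²` mass on the middle interval `[1,2]`
equals `γ(2λ)` times the sum of the masses on `[0,1]` and `[2,3]`,
where `γ(r) = 1/(e^r + e^{-r})`. -/
theorem three_interval_identity_eigenmode (lam : ℝ) (hlam : 0 < lam) (c : ℝ) :
    (∫ τ in (1:ℝ)..2, (c * Real.exp (-lam * τ)) ^ 2) =
      (1 / (Real.exp (2 * lam) + Real.exp (-(2 * lam)))) *
        ((∫ τ in (0:ℝ)..1, (c * Real.exp (-lam * τ)) ^ 2) +
          ∫ τ in (2:ℝ)..3, (c * Real.exp (-lam * τ)) ^ 2) := by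
  have h0 := integral_sq_eigenmode_shift lam c 1 2 (-1)
  have h2 := integral_sq_eigenmode_shift lam c 1 2 1
  norm_num at h0 h2
  have hpos : Real.exp (2 * lam) + Real.exp (-(2 * lam)) ≠ 0 := by positivity
  simp only [neg_mul]
  rw [h0, h2, ← add_mul, ← mul_assoc, one_div_mul_cancel hpos, one_mul]
end

section
/- Let δ > 0, let λ : ℕ → ℝ satisfy λ_i > δ for all i, and let c : ℕ → ℝ be a sequence with Σ_i c_i² < ∞ which is not identically zero. Define F : ℝ → ℝ by F(τ) := Σ_i c_i²·e^{−2λ_i τ} (the sum converges for all τ ≥ 0). Then ∫₁² F(τ) dτ < γ(2δ)·( ∫₀¹ F(τ) dτ + ∫₂³ F(τ) dτ ), where γ(r) := 1/(e^r + e^{−r}). -/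
/-!
The inequality already holds pointwise after translation. Each mode satisfies
`e^{-2λ(τ-1)} + e^{-2λ(τ+1)} = (e^{2λ} + e^{-2λ}) e^{-2λτ}`, and `r ↦ e^r + e^{-r} = 2 cosh r` is
strictly increasing on `r > 0`, so summing against the weights `c_i²` gives
`(e^{2δ} + e^{-2δ}) F(τ) < F(τ-1) + F(τ+1)` for `τ ≥ 1` (`superposition_shift_lt`).
Since `F` is continuous on `[0, ∞)` (`superposition_continuousOn`), the strict inequality survives
integration over `[1, 2]`, and the integrals of the translates are those over `[0, 1]` and `[2, 3]`.
-/

lemma superposition_term_le {δ : ℝ} (hδ : 0 < δ) {lam : ℕ → ℝ} (hlam : ∀ i, δ < lam i)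
    (c : ℕ → ℝ) (i : ℕ) {τ : ℝ} (hτ : 0 ≤ τ) :
    (c i) ^ 2 * Real.exp (-(2 * lam i * τ)) ≤ (c i) ^ 2 := by
  have h : 0 ≤ 2 * lam i * τ := mul_nonneg (by linarith [hlam i]) hτ
  exact mul_le_of_le_one_right (sq_nonneg _) (Real.exp_le_one_iff.2 (by linarith))

lemma superposition_summable {δ : ℝ} (hδ : 0 < δ) {lam : ℕ → ℝ} (hlam : ∀ i, δ < lam i)
    {c : ℕ → ℝ} (hsum : Summable fun i => (c i) ^ 2) {τ : ℝ} (hτ : 0 ≤ τ) :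
    Summable fun i => (c i) ^ 2 * Real.exp (-(2 * lam i * τ)) :=
  Summable.of_nonneg_of_le (fun _ => by positivity)
    (fun i => superposition_term_le hδ hlam c i hτ) hsum

lemma superposition_continuousOn {δ : ℝ} (hδ : 0 < δ) {lam : ℕ → ℝ} (hlam : ∀ i, δ < lam i)
    {c : ℕ → ℝ} (hsum : Summable fun i => (c i) ^ 2) :
    ContinuousOn (fun τ : ℝ => ∑' i, (c i) ^ 2 * Real.exp (-(2 * lam i * τ))) (Set.Ici 0) := by
  refine continuousOn_tsum (fun i => by fun_prop) hsum fun i τ hτ => ?_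
  rw [Real.norm_of_nonneg (by positivity)]
  exact superposition_term_le hδ hlam c i hτ

/-- The pointwise form of the three-interval inequality. -/
lemma superposition_shift_lt {δ : ℝ} (hδ : 0 < δ) {lam : ℕ → ℝ} (hlam : ∀ i, δ < lam i)
    {c : ℕ → ℝ} (hsum : Summable fun i => (c i) ^ 2) (hne : ∃ i, c i ≠ 0) {τ : ℝ} (hτ : 1 ≤ τ) :
    (Real.exp (2 * δ) + Real.exp (-(2 * δ))) * ∑' i, (c i) ^ 2 * Real.exp (-(2 * lam i * τ)) <
      (∑' i, (c i) ^ 2 * Real.exp (-(2 * lam i * (τ - 1)))) +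
        ∑' i, (c i) ^ 2 * Real.exp (-(2 * lam i * (τ + 1))) := by
  have hs := superposition_summable hδ hlam hsum (τ := τ) (by linarith)
  have hs₁ := superposition_summable hδ hlam hsum (τ := τ - 1) (by linarith)
  have hs₂ := superposition_summable hδ hlam hsum (τ := τ + 1) (by linarith)
  have hmode : ∀ i, (c i) ^ 2 * Real.exp (-(2 * lam i * (τ - 1))) +
      (c i) ^ 2 * Real.exp (-(2 * lam i * (τ + 1))) =
      (Real.exp (2 * lam i) + Real.exp (-(2 * lam i))) *
        ((c i) ^ 2 * Real.exp (-(2 * lam i * τ))) := by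
    intro i
    have h₁ : -(2 * lam i * (τ - 1)) = 2 * lam i + -(2 * lam i * τ) := by ring
    have h₂ : -(2 * lam i * (τ + 1)) = -(2 * lam i) + -(2 * lam i * τ) := by ring
    rw [h₁, h₂, Real.exp_add, Real.exp_add]
    ring
  have hcosh : ∀ i, Real.exp (2 * δ) + Real.exp (-(2 * δ)) <
      Real.exp (2 * lam i) + Real.exp (-(2 * lam i)) := by
    intro i
    have h : Real.cosh (2 * δ) < Real.cosh (2 * lam i) := by
      rw [Real.cosh_lt_cosh, abs_of_pos (by linarith), abs_of_pos (by linarith [hlam i])]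
      linarith [hlam i]
    rw [Real.cosh_eq, Real.cosh_eq] at h
    linarith
  obtain ⟨j, hj⟩ := hne
  rw [← tsum_mul_left, ← hs₁.tsum_add hs₂]
  refine Summable.tsum_lt_tsum (i := j) (fun i => ?_) ?_ (hs.mul_left _) (hs₁.add hs₂)
  · rw [hmode]
    exact mul_le_mul_of_nonneg_right (hcosh i).le (by positivity)
  · rw [hmode]
    exact mul_lt_mul_of_pos_right (hcosh j) (by positivity)


/-- Strict three-interval inequality for a superposition of exponentially
decaying eigenmodes: if all eigenvalues `λ i` exceed `δ > 0` and
`F(τ) = Σ_i c_i² e^{-2 λ_i τ}` with `Σ c_i² < ∞` and `c` not identically zero,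
then `∫₁² F < γ(2δ) (∫₀¹ F + ∫₂³ F)`, where `γ(r) = 1/(e^r + e^{-r})`. -/
theorem three_interval_strict_superposition (δ : ℝ) (hδ : 0 < δ)
    (lam : ℕ → ℝ) (hlam : ∀ i, δ < lam i)
    (c : ℕ → ℝ) (hsum : Summable fun i => (c i) ^ 2) (hne : ∃ i, c i ≠ 0) :
    (∫ τ in (1:ℝ)..2, ∑' i, (c i) ^ 2 * Real.exp (-(2 * lam i * τ))) <
      (1 / (Real.exp (2 * δ) + Real.exp (-(2 * δ)))) *
        ((∫ τ in (0:ℝ)..1, ∑' i, (c i) ^ 2 * Real.exp (-(2 * lam i * τ))) +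
          ∫ τ in (2:ℝ)..3, ∑' i, (c i) ^ 2 * Real.exp (-(2 * lam i * τ))) := by
  set F : ℝ → ℝ := fun τ => ∑' i, (c i) ^ 2 * Real.exp (-(2 * lam i * τ)) with hF
  have hcont : ContinuousOn F (Set.Ici 0) := superposition_continuousOn hδ hlam hsum
  have hlt : ∀ τ, 1 ≤ τ →
      (Real.exp (2 * δ) + Real.exp (-(2 * δ))) * F τ < F (τ - 1) + F (τ + 1) :=
    fun τ hτ => superposition_shift_lt hδ hlam hsum hne hτ
  change (∫ τ in (1:ℝ)..2, F τ) < _ * ((∫ τ in (0:ℝ)..1, F τ) + ∫ τ in (2:ℝ)..3, F τ)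
  have hc : ContinuousOn F (Set.Icc 1 2) := hcont.mono fun τ hτ => by
    simp only [Set.mem_Icc, Set.mem_Ici] at *; linarith
  have hc₁ : ContinuousOn (fun τ => F (τ - 1)) (Set.Icc 1 2) :=
    hcont.comp (by fun_prop) fun τ hτ => by
      simp only [Set.mem_Icc, Set.mem_Ici] at *; linarith
  have hc₂ : ContinuousOn (fun τ => F (τ + 1)) (Set.Icc 1 2) :=
    hcont.comp (by fun_prop) fun τ hτ => by
      simp only [Set.mem_Icc, Set.mem_Ici] at *; linarith
  have hint := intervalIntegral.integral_lt_integral_of_continuousOn_of_le_of_exists_lt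
    (a := (1:ℝ)) (b := 2) (by norm_num)
    (hc.const_mul (Real.exp (2 * δ) + Real.exp (-(2 * δ)))) (hc₁.add hc₂)
    (fun τ hτ => (hlt τ hτ.1.le).le) ⟨1, by norm_num, hlt 1 le_rfl⟩
  have hadd : (∫ τ in (1:ℝ)..2, (F (τ - 1) + F (τ + 1))) =
      (∫ τ in (0:ℝ)..1, F τ) + ∫ τ in (2:ℝ)..3, F τ := by
    rw [intervalIntegral.integral_add (hc₁.intervalIntegrable_of_Icc (by norm_num))
      (hc₂.intervalIntegrable_of_Icc (by norm_num)),
      intervalIntegral.integral_comp_sub_right (fun τ => F τ),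
      intervalIntegral.integral_comp_add_right (fun τ => F τ)]
    norm_num
  rw [intervalIntegral.integral_const_mul] at hint
  rw [one_div, ← div_eq_inv_mul, lt_div_iff₀ (by positivity), ← hadd, mul_comm]
  exact hint
end

section
/- Let 0 < δ < 2π and let θ, μ : ℝ × ℝ → ℂ be smooth functions, both 1-periodic in the second variable (θ(τ, t+1) = θ(τ, t) and μ(τ, t+1) = μ(τ, t) for all τ, t), such that: (i) (1/2)(∂θ/∂τ + i·∂θ/∂t)(τ,t) = μ(τ,t) for all τ ≥ 0 and all t; (ii) θ and its partial derivatives up to second order are bounded on [0,∞) × ℝ; (iii) there is a constant C > 0 such that for all τ ≥ 0, (∫₀¹ |μ(τ,t)|² dt)^{1/2} + (∫₀¹ (|∂μ/∂τ(τ,t)|² + |∂μ/∂t(τ,t)|²) dt)^{1/2} ≤ C·e^{−δτ}; and (iv) θ(τ,t) → 0 as τ → +∞, uniformly in t. Then there exists a constant C̄ > 0 such that (∫₀¹ |θ(τ,t)|² dt)^{1/2} ≤ C̄·e^{−δτ} for all τ ≥ 0. -/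
/-!
Expand `θ(τ, ·)` in a Fourier series on the circle. The Cauchy–Riemann equation decouples into
the scalar equations `θₙ' = 2πn θₙ + 2 μₙ`, that is `(e^{-2πnτ} θₙ)' = 2 e^{-2πnτ} μₙ`
(`hasDerivAt_exp_mul_fourierCoeffOn`), and `|μₙ(τ)| ≤ ‖μ(τ, ·)‖_{L²} ≤ C e^{-δτ}` by Parseval.

For `n ≥ 0` the factor `e^{-2πnτ} θₙ` tends to `0` at infinity, so one integrates from infinity; for
`n ≤ -1` one integrates from `0`, and the homogeneous part `e^{2πnτ} θₙ(0)` decays faster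
than `e^{-δτ}` because `δ < 2π`. In both cases (`mode_decay`)
`|θₙ(τ)| ≤ e^{-δτ} (|θₙ(0)| + 2C / |2πn + δ|)`, where `2πn + δ ≠ 0` since `0 < δ < 2π`.
The right-hand sides are square summable in `n`, and Parseval's identity gives the claim.
-/

open MeasureTheory Set Filter Topology

/-- Differentiation under the integral sign for a `C¹` integrand on the compact interval
`[0, 1]`. -/
lemma hasDerivAt_integral_of_contDiff_one {F : ℝ → ℝ → ℂ}
    (hF : ContDiff ℝ 1 (Function.uncurry F)) (τ : ℝ) :
    HasDerivAt (fun s => ∫ t in (0:ℝ)..1, F s t)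
      (∫ t in (0:ℝ)..1, deriv (fun s => F s t) τ) τ := by
  have hd : ∀ s t, HasDerivAt (fun s => F s t)
      (fderiv ℝ (Function.uncurry F) (s, t) (1, 0)) s := by
    intro s t
    have h1 : HasFDerivAt (Function.uncurry F) (fderiv ℝ (Function.uncurry F) (s, t)) (s, t) :=
      (hF.differentiable one_ne_zero _).hasFDerivAt
    exact h1.comp_hasDerivAt s ((hasDerivAt_id s).prodMk (hasDerivAt_const s t))
  have hcont : Continuous fun p : ℝ × ℝ => fderiv ℝ (Function.uncurry F) p (1, 0) :=
    (hF.continuous_fderiv one_ne_zero).clm_apply continuous_const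
  have hFc : ∀ s, Continuous (F s) := fun s => hF.continuous.comp (by fun_prop : Continuous
    fun t : ℝ => (s, t))
  have hdc : ∀ s, Continuous fun t => fderiv ℝ (Function.uncurry F) (s, t) (1, 0) :=
    fun s => hcont.comp (by fun_prop : Continuous fun t : ℝ => (s, t))
  obtain ⟨M, hM⟩ := ((isCompact_Icc (a := τ - 1) (b := τ + 1)).prod
    (isCompact_Icc (a := (0:ℝ)) (b := 1))).exists_bound_of_continuousOn hcont.continuousOn
  have key := (intervalIntegral.hasDerivAt_integral_of_dominated_loc_of_deriv_le
    (μ := volume) (a := 0) (b := 1) (F := F)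
    (F' := fun s t => fderiv ℝ (Function.uncurry F) (s, t) (1, 0)) (x₀ := τ)
    (s := Icc (τ - 1) (τ + 1)) (bound := fun _ => M)
    (Icc_mem_nhds (by linarith) (by linarith))
    (Eventually.of_forall fun s => (hFc s).aestronglyMeasurable)
    ((hFc τ).intervalIntegrable _ _) (hdc τ).aestronglyMeasurable
    (Eventually.of_forall fun t ht s hs => hM (s, t) ⟨hs, by
      rw [uIoc_of_le zero_le_one] at ht
      exact Ioc_subset_Icc_self ht⟩)
    intervalIntegrable_const
    (Eventually.of_forall fun t _ s _ => hd s t)).2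
  simpa only [(hd _ _).deriv] using key

lemma fourierCoeffOn_unit (f : ℝ → ℂ) (n : ℤ) :
    fourierCoeffOn zero_lt_one f n =
      ∫ t in (0:ℝ)..1, Complex.exp (-(2 * Real.pi * n * (Complex.I * t))) * f t := by
  rw [fourierCoeffOn_eq_integral]
  simp only [sub_zero, div_one, one_smul, smul_eq_mul]
  refine intervalIntegral.integral_congr fun t _ => ?_
  simp only [fourier_coe_apply]
  congr 2
  push_cast
  ring

lemma exp_mul_fourierCoeffOn (f : ℝ → ℂ) (n : ℤ) (τ : ℝ) :
    Complex.exp (-(2 * Real.pi * n * τ)) * fourierCoeffOn zero_lt_one f n =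
      ∫ t in (0:ℝ)..1, Complex.exp (-(2 * Real.pi * n * (τ + Complex.I * t))) * f t := by
  rw [fourierCoeffOn_unit, ← intervalIntegral.integral_const_mul]
  refine intervalIntegral.integral_congr fun t _ => ?_
  simp only [← mul_assoc, ← Complex.exp_add]
  congr 2
  ring

/-- The equation satisfied by the `n`-th Fourier mode. The weight `e^{-2πn(τ + it)}` is
holomorphic, so `∂̄` passes through it, and the `t`-derivative integrates to zero over a period. -/
lemma hasDerivAt_exp_mul_fourierCoeffOn {θ : ℝ → ℝ → ℂ}
    (hθ : ContDiff ℝ 1 (Function.uncurry θ)) (hper : ∀ τ t : ℝ, θ τ (t + 1) = θ τ t)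
    (n : ℤ) (τ : ℝ) :
    HasDerivAt
      (fun s : ℝ => Complex.exp (-(2 * Real.pi * n * s)) * fourierCoeffOn zero_lt_one (θ s) n)
      (Complex.exp (-(2 * Real.pi * n * τ)) * fourierCoeffOn zero_lt_one
        (fun t => deriv (fun s => θ s t) τ + Complex.I * deriv (θ τ) t) n) τ := by
  simp only [exp_mul_fourierCoeffOn]
  set W : ℝ → ℝ → ℂ := fun s t => Complex.exp (-(2 * Real.pi * n * (s + Complex.I * t))) with hW
  have hWs : ∀ s t, HasDerivAt (fun s => W s t) (W s t * (-(2 * Real.pi * n))) s := by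
    intro s t
    refine HasDerivAt.cexp (f := fun s : ℝ => -(2 * Real.pi * n * (s + Complex.I * t))) ?_
    simpa using (((Complex.ofRealCLM.hasDerivAt (x := s)).add_const (Complex.I * t)).const_mul
      (2 * Real.pi * n : ℂ)).fun_neg
  have hWt : ∀ s t, HasDerivAt (W s) (W s t * (-(2 * Real.pi * n * Complex.I))) t := by
    intro s t
    refine HasDerivAt.cexp (f := fun t : ℝ => -(2 * Real.pi * n * (s + Complex.I * t))) ?_
    simpa using ((((Complex.ofRealCLM.hasDerivAt (x := t)).const_mul Complex.I).const_add
      (s : ℂ)).const_mul (2 * Real.pi * n : ℂ)).fun_neg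
  have hWc : ContDiff ℝ 1 (Function.uncurry W) := by
    have h1 : ContDiff ℝ 1 fun p : ℝ × ℝ => (p.1 : ℂ) :=
      Complex.ofRealCLM.contDiff.comp contDiff_fst
    have h2 : ContDiff ℝ 1 fun p : ℝ × ℝ => (p.2 : ℂ) :=
      Complex.ofRealCLM.contDiff.comp contDiff_snd
    exact (contDiff_const.mul (h1.add (contDiff_const.mul h2))).neg.cexp
  have hθs : ∀ s t, HasDerivAt (fun s => θ s t) (deriv (fun s => θ s t) s) s := fun s t =>
    ((hθ.comp (contDiff_id.prodMk contDiff_const)).differentiable one_ne_zero s).hasDerivAt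
  have hθtc : ∀ s, ContDiff ℝ 1 (θ s) := fun s => hθ.comp (contDiff_const.prodMk contDiff_id)
  have hθt : ∀ s t, HasDerivAt (θ s) (deriv (θ s) t) t := fun s t =>
    ((hθtc s).differentiable one_ne_zero t).hasDerivAt
  have hWtc : ∀ s, ContDiff ℝ 1 (W s) := fun s => hWc.comp (contDiff_const.prodMk contDiff_id)
  have hF : ContDiff ℝ 1 (Function.uncurry fun s t => W s t * θ s t) := hWc.mul hθ
  convert hasDerivAt_integral_of_contDiff_one hF τ using 1
  have hFt : ∀ t, HasDerivAt (fun t => W τ t * θ τ t)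
      (W τ t * (-(2 * Real.pi * n * Complex.I)) * θ τ t + W τ t * deriv (θ τ) t) t :=
    fun t => (hWt τ t).mul (hθt τ t)
  have hFtc : Continuous fun t =>
      W τ t * (-(2 * Real.pi * n * Complex.I)) * θ τ t + W τ t * deriv (θ τ) t :=
    (((hWtc τ).continuous.mul continuous_const).mul (hθtc τ).continuous).add
      ((hWtc τ).continuous.mul ((hθtc τ).continuous_deriv_one))
  -- `e^{-2πni} = 1`, so the boundary terms at `t = 0` and `t = 1` cancel.
  have hW1 : W τ 1 = W τ 0 := by
    rw [hW]
    refine Complex.exp_eq_exp_iff_exists_int.mpr ⟨-n, ?_⟩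
    push_cast
    ring
  have hzero : ∫ t in (0:ℝ)..1,
      (W τ t * (-(2 * Real.pi * n * Complex.I)) * θ τ t + W τ t * deriv (θ τ) t) = 0 := by
    rw [intervalIntegral.integral_eq_sub_of_hasDerivAt (fun t _ => hFt t)
      (hFtc.intervalIntegrable _ _), hW1]
    have := hper τ 0
    rw [zero_add] at this
    rw [this, sub_self]
  have hFsc : Continuous fun t => deriv (fun s => W s t * θ s t) τ := by
    have h1 : (fun t => deriv (fun s => W s t * θ s t) τ) = fun t =>
        fderiv ℝ (Function.uncurry fun s t => W s t * θ s t) (τ, t) (1, 0) := by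
      funext t
      exact ((hF.differentiable one_ne_zero (τ, t)).hasFDerivAt.comp_hasDerivAt τ
        ((hasDerivAt_id τ).prodMk (hasDerivAt_const τ t))).deriv
    rw [h1]
    exact ((hF.continuous_fderiv one_ne_zero).comp
      (by fun_prop : Continuous fun t : ℝ => (τ, t))).clm_apply continuous_const
  have hIFt : Continuous fun t => Complex.I *
      (W τ t * (-(2 * Real.pi * n * Complex.I)) * θ τ t + W τ t * deriv (θ τ) t) :=
    continuous_const.mul hFtc
  rw [← add_zero (∫ t in (0:ℝ)..1, deriv (fun s => W s t * θ s t) τ),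
    ← mul_zero Complex.I, ← hzero, ← intervalIntegral.integral_const_mul,
    ← intervalIntegral.integral_add (hFsc.intervalIntegrable _ _)
      (hIFt.intervalIntegrable _ _)]
  refine intervalIntegral.integral_congr fun t _ => ?_
  rw [((hWs τ t).fun_mul (hθs τ t)).deriv]
  change W τ t * _ = _
  linear_combination (2 * Real.pi * n * W τ t * θ τ t) * Complex.I_sq

/-- Decay of a solution of the scalar equation `c' = k c + d` with `|d| ≤ K e^{-δτ}`, when either
`k ≥ 0` and `c → 0` at infinity (integrate from infinity), or `k < -δ` (integrate from `0`). -/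
lemma mode_decay {c d : ℝ → ℂ} {k δ K : ℝ} (hκ : k + δ ≠ 0) (hK : 0 ≤ K)
    (hG : ∀ τ : ℝ, HasDerivAt (fun s : ℝ => Complex.exp (-(k * s)) * c s)
      (Complex.exp (-(k * τ)) * d τ) τ)
    (hd : ∀ τ, 0 ≤ τ → ‖d τ‖ ≤ K * Real.exp (-δ * τ))
    (hk : (0 ≤ k ∧ 0 < k + δ ∧ Tendsto c atTop (𝓝 0)) ∨ k + δ < 0) (τ : ℝ) (hτ : 0 ≤ τ) :
    ‖c τ‖ ≤ Real.exp (-δ * τ) * (‖c 0‖ + K / |k + δ|) := by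
  set G : ℝ → ℂ := fun s : ℝ => Complex.exp (-(k * s)) * c s with hGdef
  have hnorm : ∀ s : ℝ, ‖Complex.exp (-((k : ℂ) * s))‖ = Real.exp (-(k * s)) := by
    intro s
    rw [Complex.norm_exp]
    simp
  have hcG : ∀ s, ‖c s‖ = Real.exp (k * s) * ‖G s‖ := by
    intro s
    rw [hGdef, norm_mul, hnorm, ← mul_assoc, ← Real.exp_add]
    simp
  -- The bound is obtained by integrating `‖G'‖ ≤ K e^{-(k+δ)s}`, for either sign of `k + δ`.
  have hdiff : ∀ a b, 0 ≤ a → a ≤ b → ‖G b - G a‖ ≤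
      K / (k + δ) * (Real.exp (-(k + δ) * a) - Real.exp (-(k + δ) * b)) := by
    intro a b ha hab
    refine image_norm_le_of_norm_deriv_right_le_deriv_boundary (a := a) (b := b)
      (f := fun x => G x - G a)
      (f' := fun x => Complex.exp (-(k * x)) * d x)
      (B := fun x => K / (k + δ) * (Real.exp (-(k + δ) * a) - Real.exp (-(k + δ) * x)))
      (B' := fun x => K * Real.exp (-(k + δ) * x))
      (fun x _ => ((hG x).sub_const _).continuousAt.continuousWithinAt)
      (fun x _ => ((hG x).sub_const _).hasDerivWithinAt) (by simp) ?_ ?_ ⟨hab, le_rfl⟩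
    · intro x
      have h := ((((hasDerivAt_id x).const_mul (-(k + δ))).exp).const_sub
        (Real.exp (-(k + δ) * a))).const_mul (K / (k + δ))
      refine h.congr_deriv ?_
      simp only [id]
      field_simp
    · intro x hx
      rw [norm_mul, hnorm]
      calc Real.exp (-(k * x)) * ‖d x‖ ≤ Real.exp (-(k * x)) * (K * Real.exp (-δ * x)) := by
            gcongr
            exact hd x (ha.trans hx.1)
        _ = K * Real.exp (-(k + δ) * x) := by
            rw [mul_left_comm, ← Real.exp_add]
            ring_nf
  rw [hcG τ]
  have hexp : Real.exp (k * τ) * Real.exp (-(k + δ) * τ) = Real.exp (-δ * τ) := by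
    rw [← Real.exp_add]
    ring_nf
  rcases hk with ⟨hk0, hpos, hlim⟩ | hneg
  · have hGlim : Tendsto G atTop (𝓝 0) := by
      refine squeeze_zero_norm' ?_ (tendsto_zero_iff_norm_tendsto_zero.mp hlim)
      filter_upwards [eventually_ge_atTop 0] with s hs
      rw [hGdef, norm_mul, hnorm]
      exact mul_le_of_le_one_left (norm_nonneg _)
        (Real.exp_le_one_iff.mpr (by have := mul_nonneg hk0 hs; linarith))
    have hGτ : ‖G τ‖ ≤ K / (k + δ) * Real.exp (-(k + δ) * τ) := by
      have h1 : Tendsto (fun b => ‖G b - G τ‖) atTop (𝓝 ‖G τ‖) := by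
        simpa using (hGlim.sub_const (G τ)).norm
      refine le_of_tendsto h1 ?_
      filter_upwards [eventually_ge_atTop τ] with b hb
      refine (hdiff τ b hτ hb).trans ?_
      gcongr
      linarith [Real.exp_pos (-(k + δ) * b)]
    rw [abs_of_pos hpos]
    calc Real.exp (k * τ) * ‖G τ‖ ≤
          Real.exp (k * τ) * (K / (k + δ) * Real.exp (-(k + δ) * τ)) := by gcongr
      _ = Real.exp (-δ * τ) * (K / (k + δ)) := by rw [← hexp]; ring
      _ ≤ _ := by
        gcongr
        linarith [norm_nonneg (c 0)]
  · have hG0 : ‖G 0‖ = ‖c 0‖ := by simp [hGdef]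
    have h1 := hdiff 0 τ le_rfl hτ
    have hq : K / |k + δ| = -(K / (k + δ)) := by
      rw [abs_of_neg hneg, div_neg]
    have hq0 : 0 ≤ K / |k + δ| := by positivity
    have hGτ : ‖G τ‖ ≤ ‖c 0‖ + K / |k + δ| * Real.exp (-(k + δ) * τ) := by
      have h2 : ‖G τ‖ ≤ ‖G 0‖ + ‖G τ - G 0‖ := by
        simpa using norm_add_le (G 0) (G τ - G 0)
      rw [mul_zero, Real.exp_zero] at h1
      have h3 : K / (k + δ) * (1 - Real.exp (-(k + δ) * τ)) =
        K / |k + δ| * Real.exp (-(k + δ) * τ) - K / |k + δ| := by rw [hq]; ring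
      linarith
    have hle : Real.exp (k * τ) ≤ Real.exp (-δ * τ) := by
      apply Real.exp_le_exp.mpr
      nlinarith
    calc Real.exp (k * τ) * ‖G τ‖ ≤
          Real.exp (k * τ) * (‖c 0‖ + K / |k + δ| * Real.exp (-(k + δ) * τ)) := by gcongr
      _ = Real.exp (k * τ) * ‖c 0‖ + Real.exp (-δ * τ) * (K / |k + δ|) := by rw [← hexp]; ring
      _ ≤ Real.exp (-δ * τ) * ‖c 0‖ + Real.exp (-δ * τ) * (K / |k + δ|) := by gcongr
      _ = _ := by ring

/-- Parseval's identity on `[0, 1]`. -/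
lemma hasSum_sq_fourierCoeffOn_unit {f : ℝ → ℂ} (hf : Continuous f) :
    HasSum (fun n => ‖fourierCoeffOn zero_lt_one f n‖ ^ 2) (∫ t in (0:ℝ)..1, ‖f t‖ ^ 2) := by
  have h2 : MemLp f 2 (volume.restrict (Ioc (0:ℝ) 1)) := by
    rw [memLp_two_iff_integrable_sq_norm hf.aestronglyMeasurable]
    exact ((hf.norm.pow 2).integrableOn_Icc (a := 0) (b := 1)).mono_set Ioc_subset_Icc_self
  simpa using hasSum_sq_fourierCoeffOn zero_lt_one h2


/-- Lemma 9.2 of the paper: exponential decay for the inhomogeneous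
Cauchy–Riemann equation `∂̄θ = μ` on the half-cylinder `[0,∞) × S¹`
(modeled by functions on `ℝ × ℝ`, 1-periodic in the second variable).
If `μ` decays exponentially at rate `δ ∈ (0, 2π)` in `W^{1,2}(S¹)`-norm along
the slices, `θ` is bounded together with its derivatives up to second order on
`[0,∞) × ℝ`, and `θ → 0` uniformly as `τ → ∞`, then the slice-wise `L²`-norm of
`θ` decays exponentially at the same rate `δ`. -/
theorem exp_decay_CR (δ : ℝ) (hδ0 : 0 < δ) (hδ : δ < 2 * Real.pi)
    (θ μ : ℝ → ℝ → ℂ)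
    (hθ : ContDiff ℝ (⊤ : ℕ∞) (Function.uncurry θ))
    (hμ : ContDiff ℝ (⊤ : ℕ∞) (Function.uncurry μ))
    (hθper : ∀ τ t : ℝ, θ τ (t + 1) = θ τ t)
    (hμper : ∀ τ t : ℝ, μ τ (t + 1) = μ τ t)
    (hCR : ∀ τ t : ℝ, 0 ≤ τ →
      (1 / 2 : ℂ) * (deriv (fun s => θ s t) τ + Complex.I * deriv (θ τ) t) = μ τ t)
    (hbdd : ∃ B : ℝ, ∀ τ t : ℝ, 0 ≤ τ → ∀ n : ℕ, n ≤ 2 →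
      ‖iteratedFDeriv ℝ n (Function.uncurry θ) (τ, t)‖ ≤ B)
    (C : ℝ) (hC : 0 < C)
    (hμdecay : ∀ τ : ℝ, 0 ≤ τ →
      Real.sqrt (∫ t in (0:ℝ)..1, ‖μ τ t‖ ^ 2) +
        Real.sqrt (∫ t in (0:ℝ)..1,
          (‖deriv (fun s => μ s t) τ‖ ^ 2 + ‖deriv (μ τ) t‖ ^ 2)) ≤
      C * Real.exp (-δ * τ))
    (hθlim : ∀ ε > (0:ℝ), ∃ τ₀ : ℝ, ∀ τ ≥ τ₀, ∀ t : ℝ, ‖θ τ t‖ ≤ ε) :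
    ∃ Cbar > (0:ℝ), ∀ τ : ℝ, 0 ≤ τ →
      Real.sqrt (∫ t in (0:ℝ)..1, ‖θ τ t‖ ^ 2) ≤ Cbar * Real.exp (-δ * τ) := by
  have hθ1 : ContDiff ℝ 1 (Function.uncurry θ) := hθ.of_le (by exact_mod_cast le_top)
  have hθc : ∀ s, Continuous (θ s) := fun s =>
    hθ.continuous.comp (by fun_prop : Continuous fun t : ℝ => (s, t))
  have hμc : ∀ s, Continuous (μ s) := fun s =>
    hμ.continuous.comp (by fun_prop : Continuous fun t : ℝ => (s, t))
  set c : ℤ → ℝ → ℂ := fun n τ => fourierCoeffOn zero_lt_one (θ τ) n with hc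
  have hμn : ∀ (n : ℤ) (τ : ℝ), 0 ≤ τ →
      ‖fourierCoeffOn zero_lt_one (μ τ) n‖ ≤ C * Real.exp (-δ * τ) := by
    intro n τ hτ
    have h1 := le_hasSum (hasSum_sq_fourierCoeffOn_unit (hμc τ)) n fun _ _ => sq_nonneg _
    have h2 := Real.le_sqrt_of_sq_le h1
    have h3 := hμdecay τ hτ
    have h4 := Real.sqrt_nonneg (∫ t in (0:ℝ)..1,
          (‖deriv (fun s => μ s t) τ‖ ^ 2 + ‖deriv (μ τ) t‖ ^ 2))
    linarith
  have hlim : ∀ n, Tendsto (c n) atTop (𝓝 0) := by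
    intro n
    rw [Metric.tendsto_atTop]
    intro ε hε
    obtain ⟨τ₀, h⟩ := hθlim (ε / 2) (half_pos hε)
    refine ⟨τ₀, fun τ hτ => ?_⟩
    have h1 : ‖c n τ‖ ≤ ε / 2 * |(1:ℝ) - 0| := by
      simp only [hc, fourierCoeffOn_unit]
      refine intervalIntegral.norm_integral_le_of_norm_le_const fun t _ => ?_
      rw [norm_mul, Complex.norm_exp]
      simpa using h τ hτ t
    rw [dist_zero_right]
    simp only [sub_zero, abs_one, mul_one] at h1
    linarith
  have hbound : ∀ (n : ℤ) (τ : ℝ), 0 ≤ τ →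
      ‖c n τ‖ ≤ Real.exp (-δ * τ) * (‖c n 0‖ + 2 * C / |2 * Real.pi * n + δ|) := by
    intro n τ hτ
    have hsign : (0 ≤ 2 * Real.pi * (n : ℝ) ∧ 0 < 2 * Real.pi * (n : ℝ) + δ) ∨
        2 * Real.pi * (n : ℝ) + δ < 0 := by
      rcases le_or_gt 0 n with hn | hn
      · left
        have : (0:ℝ) ≤ n := by exact_mod_cast hn
        have : 0 ≤ 2 * Real.pi * (n : ℝ) := by positivity
        exact ⟨this, by linarith⟩
      · right
        have : (n:ℝ) ≤ -1 := by exact_mod_cast (by omega : n ≤ -1)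
        nlinarith [Real.pi_pos]
    refine mode_decay (k := 2 * Real.pi * n)
      (d := fun τ => fourierCoeffOn zero_lt_one
        (fun t => deriv (fun s => θ s t) τ + Complex.I * deriv (θ τ) t) n) ?_ (by positivity)
      ?_ ?_ ?_ τ hτ
    · rcases hsign with h | h
      · exact h.2.ne'
      · exact h.ne
    · intro τ
      have h := hasDerivAt_exp_mul_fourierCoeffOn hθ1 hθper n τ
      push_cast
      exact h
    · intro τ hτ
      have h1 : (fun t => deriv (fun s => θ s t) τ + Complex.I * deriv (θ τ) t) =
          fun t => 2 * μ τ t := by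
        funext t
        rw [← hCR τ t hτ]
        ring
      simp only [h1, fourierCoeffOn.const_mul, norm_mul, Complex.norm_ofNat]
      linarith [hμn n τ hτ]
    · exact hsign.imp (fun h => ⟨h.1, h.2, hlim n⟩) id
  -- `|2πn + δ| = 2π |n + δ/(2π)|`: a shifted `p`-series with `p = 2`.
  have hsum2 : Summable fun n : ℤ => (2 * C / |2 * Real.pi * n + δ|) ^ 2 := by
    have h := ((Real.summable_one_div_int_add_rpow (δ / (2 * Real.pi)) 2).mpr
      one_lt_two).mul_left ((2 * C / (2 * Real.pi)) ^ 2)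
    refine h.congr fun n => ?_
    have hpi := Real.pi_pos
    have h2 : 2 * Real.pi * (n : ℝ) + δ = 2 * Real.pi * (n + δ / (2 * Real.pi)) := by
      field_simp
    rw [h2, abs_mul, abs_of_pos (by positivity : 0 < 2 * Real.pi), Real.rpow_two,
      ← one_div_pow, ← mul_pow]
    congr 1
    rw [div_mul_div_comm, mul_one]
  set A : ℤ → ℝ := fun n => 2 * (‖c n 0‖ ^ 2 + (2 * C / |2 * Real.pi * n + δ|) ^ 2) with hA
  have hAs : Summable A :=
    ((hasSum_sq_fourierCoeffOn_unit (hθc 0)).summable.add hsum2).mul_left 2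
  refine ⟨Real.sqrt (∑' n, A n) + 1, by positivity, fun τ hτ => ?_⟩
  have hpars : ∫ t in (0:ℝ)..1, ‖θ τ t‖ ^ 2 ≤ Real.exp (-δ * τ) ^ 2 * ∑' n, A n := by
    refine hasSum_le (fun n => ?_) (hasSum_sq_fourierCoeffOn_unit (hθc τ))
      (hAs.hasSum.mul_left (Real.exp (-δ * τ) ^ 2))
    calc ‖c n τ‖ ^ 2 ≤ (Real.exp (-δ * τ) * (‖c n 0‖ + 2 * C / |2 * Real.pi * n + δ|)) ^ 2 := by
          gcongr
          exact hbound n τ hτ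
      _ ≤ Real.exp (-δ * τ) ^ 2 * A n := by
          rw [mul_pow]
          gcongr
          exact add_sq_le
  calc Real.sqrt (∫ t in (0:ℝ)..1, ‖θ τ t‖ ^ 2)
      ≤ Real.sqrt (Real.exp (-δ * τ) ^ 2 * ∑' n, A n) := Real.sqrt_le_sqrt hpars
    _ = Real.sqrt (∑' n, A n) * Real.exp (-δ * τ) := by
        rw [Real.sqrt_mul (sq_nonneg _), Real.sqrt_sq (Real.exp_pos _).le, mul_comm]
    _ ≤ _ := by
        gcongr
        linarith
end

section
/- Let 0 < b < c and B ≥ 0, and let f : [0,∞) → ℝ be a twice continuously differentiable, bounded function satisfying f''(τ) ≥ c²·f(τ) − B·e^{−bτ} for all τ ≥ 0. Then f(τ) ≤ (max(f(0), 0) + B/(c² − b²))·e^{−bτ} for all τ ≥ 0. -/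
/-!
Subtracting `K e^{-bτ}` with `K = max (f 0) 0 + B / (c² - b²)` turns the hypothesis into
`g'' ≥ c² g` for a function `g` that is bounded above with `g 0 ≤ 0`, and the claim into `g ≤ 0`.

The operator factors as `∂² - c² = (∂ - c)(∂ + c)`, so `u = (g' + c g) e^{-cτ}` is nondecreasing.
If `u` were positive somewhere, then `(g e^{cτ})' = u e^{2cτ}` would force `g` to grow like
`e^{cτ}`, which boundedness excludes. Hence `u ≤ 0`, so `g e^{cτ}` is nonincreasing and stays
below `g 0 ≤ 0`.
-/

open Set in
/-- First-derivative test on a half-line, with one-sided derivative data. -/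
lemma monotoneOn_Ici_of_hasDerivWithinAt {f f' : ℝ → ℝ} {s : ℝ}
    (hf : ∀ t, s ≤ t → HasDerivWithinAt f (f' t) (Ici s) t)
    (hf' : ∀ t, s ≤ t → 0 ≤ f' t) : MonotoneOn f (Ici s) :=
  monotoneOn_of_hasDerivWithinAt_nonneg (convex_Ici s)
    (fun t ht => (hf t ht).continuousWithinAt)
    (fun t ht => (hf t (interior_subset ht)).mono interior_subset)
    (fun t ht => hf' t (interior_subset ht))

open Set in
/-- A subsolution of `g'' = c² g` on `[0,∞)` that is bounded above and nonpositive at `0` is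
nonpositive: boundedness rules out the growing mode `e^{cτ}`. -/
lemma nonpos_of_second_deriv_ge {c M : ℝ} (hc : 0 < c) {g g₁ g₂ : ℝ → ℝ}
    (hg : ∀ t, 0 ≤ t → HasDerivWithinAt g (g₁ t) (Ici 0) t)
    (hg₁ : ∀ t, 0 ≤ t → HasDerivWithinAt g₁ (g₂ t) (Ici 0) t)
    (hg₂ : ∀ t, 0 ≤ t → c ^ 2 * g t ≤ g₂ t)
    (hM : ∀ t, 0 ≤ t → g t ≤ M) (h0 : g 0 ≤ 0) {t : ℝ} (ht : 0 ≤ t) : g t ≤ 0 := by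
  have hexp : ∀ (a t : ℝ) (S : Set ℝ),
      HasDerivWithinAt (fun x => Real.exp (a * x)) (Real.exp (a * t) * a) S t := by
    intro a t S
    simpa using (((hasDerivAt_id t).const_mul a).exp).hasDerivWithinAt
  have hu : MonotoneOn (fun t => (g₁ t + c * g t) * Real.exp (-c * t)) (Ici 0) := by
    refine monotoneOn_Ici_of_hasDerivWithinAt
      (fun t ht => ((hg₁ t ht).add ((hg t ht).const_mul c)).mul (hexp (-c) t _)) ?_
    intro t ht
    have h := mul_nonneg (sub_nonneg.2 (hg₂ t ht)) (Real.exp_pos (-c * t)).le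
    simp only [Pi.add_apply]
    linarith
  have hprod : ∀ t, 0 ≤ t → HasDerivWithinAt (fun t => g t * Real.exp (c * t))
      (g₁ t * Real.exp (c * t) + g t * (Real.exp (c * t) * c)) (Ici 0) t :=
    fun t ht => (hg t ht).mul (hexp c t _)
  have hv : ∀ s, 0 ≤ s → g₁ s + c * g s ≤ 0 := by
    intro s hs
    by_contra! hpos
    obtain ⟨δ, hδ⟩ : ∃ δ, δ = (g₁ s + c * g s) * Real.exp (-c * s) := ⟨_, rfl⟩
    have hδ0 : 0 < δ := hδ ▸ mul_pos hpos (Real.exp_pos _)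
    have hw : MonotoneOn
        (fun t => g t * Real.exp (c * t) - δ / (2 * c) * Real.exp (2 * c * t)) (Ici s) := by
      refine monotoneOn_Ici_of_hasDerivWithinAt (fun t ht =>
        ((hprod t (hs.trans ht)).mono (Ici_subset_Ici.2 hs)).sub
          ((hexp (2 * c) t _).const_mul (δ / (2 * c)))) ?_
      intro t ht
      have h1 : δ ≤ (g₁ t + c * g t) * Real.exp (-c * t) :=
        hδ.le.trans (hu hs (hs.trans ht) ht)
      have h2 := mul_le_mul_of_nonneg_right h1 (Real.exp_pos (2 * c * t)).le
      rw [mul_assoc (g₁ t + c * g t), ← Real.exp_add, show -c * t + 2 * c * t = c * t by ring] at h2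
      have h3 : δ / (2 * c) * (Real.exp (2 * c * t) * (2 * c)) = δ * Real.exp (2 * c * t) := by
        field_simp
      rw [h3]
      linarith
    set C := g s * Real.exp (c * s) - δ / (2 * c) * Real.exp (2 * c * s) with hC
    set k := δ / (2 * c) with hk
    have hk0 : 0 < k := by positivity
    -- Any time past `s` with `k * c * t ≥ |M| + |C|` violates the bound, as `e^{ct} > ct`.
    set T := max s ((|M| + |C|) / (k * c)) with hT
    have hsT : s ≤ T := le_max_left _ _
    have hT0 : 0 ≤ T := hs.trans hsT
    have h1 : C ≤ g T * Real.exp (c * T) - k * Real.exp (2 * c * T) :=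
      hw (self_mem_Ici) hsT hsT
    have h2 : |M| + |C| ≤ T * (k * c) := (div_le_iff₀ (by positivity)).1 (le_max_right _ _)
    have h3 : c * T + 1 ≤ Real.exp (c * T) := Real.add_one_le_exp _
    have h4 : Real.exp (2 * c * T) = Real.exp (c * T) * Real.exp (c * T) := by
      rw [← Real.exp_add]; ring_nf
    rw [h4] at h1
    set E := Real.exp (c * T) with hE
    have hE1 : 1 ≤ E := by nlinarith [mul_nonneg hc.le hT0]
    have h5 : |M| + |C| < k * E := by nlinarith
    have h6 : g T ≤ |M| := (hM T hT0).trans (le_abs_self M)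
    have h7 : -|C| * E ≤ C := by nlinarith [neg_abs_le C, abs_nonneg C]
    nlinarith
  have hanti : MonotoneOn (fun t => -(g t * Real.exp (c * t))) (Ici 0) := by
    refine monotoneOn_Ici_of_hasDerivWithinAt (fun t ht => (hprod t ht).neg) ?_
    intro t ht
    have h := mul_nonneg (neg_nonneg.2 (hv t ht)) (Real.exp_pos (c * t)).le
    linarith
  have h := hanti self_mem_Ici ht ht
  simp only [mul_zero, Real.exp_zero, mul_one, neg_le_neg_iff] at h
  exact nonpos_of_mul_nonpos_left (h.trans h0) (Real.exp_pos _)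

/-- Differential-inequality lemma: if `f` is twice continuously differentiable
and bounded on `[0,∞)` and satisfies `f'' ≥ c² f - B e^{-bτ}` there, with
`0 < b < c` and `B ≥ 0`, then `f(τ) ≤ (max(f(0),0) + B/(c² - b²)) e^{-bτ}`. -/
theorem differential_inequality_exp_decay (b c B : ℝ)
    (hb : 0 < b) (hbc : b < c) (hB : 0 ≤ B)
    (f : ℝ → ℝ) (hf : ContDiffOn ℝ 2 f (Set.Ici 0))
    (hbdd : ∃ M : ℝ, ∀ τ : ℝ, 0 ≤ τ → |f τ| ≤ M)
    (hineq : ∀ τ : ℝ, 0 ≤ τ →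
      c ^ 2 * f τ - B * Real.exp (-b * τ) ≤ iteratedDerivWithin 2 f (Set.Ici 0) τ) :
    ∀ τ : ℝ, 0 ≤ τ →
      f τ ≤ (max (f 0) 0 + B / (c ^ 2 - b ^ 2)) * Real.exp (-b * τ) := by
  intro τ hτ
  obtain ⟨M, hM⟩ := hbdd
  have hc : 0 < c := hb.trans hbc
  have hcb : 0 < c ^ 2 - b ^ 2 := by nlinarith
  set K := max (f 0) 0 + B / (c ^ 2 - b ^ 2) with hK
  have hdiv : 0 ≤ B / (c ^ 2 - b ^ 2) := by positivity
  have hK0 : 0 ≤ K := add_nonneg (le_max_right _ _) hdiv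
  have hKB : B ≤ K * (c ^ 2 - b ^ 2) :=
    (div_le_iff₀ hcb).1 (le_add_of_nonneg_left (le_max_right _ _))
  have hU := uniqueDiffOn_Ici (0 : ℝ)
  have hd : ∀ t, 0 ≤ t → HasDerivWithinAt f (derivWithin f (Set.Ici 0) t) (Set.Ici 0) t :=
    fun t ht => (hf.differentiableOn (by norm_num) t ht).hasDerivWithinAt
  have hdd : ∀ t, 0 ≤ t → HasDerivWithinAt (derivWithin f (Set.Ici 0))
      (iteratedDerivWithin 2 f (Set.Ici 0) t) (Set.Ici 0) t := by
    intro t ht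
    have h1 : ContDiffOn ℝ 1 (derivWithin f (Set.Ici 0)) (Set.Ici 0) :=
      hf.derivWithin hU (by norm_num)
    have h2 := (h1.differentiableOn (by norm_num) t ht).hasDerivWithinAt
    rwa [show derivWithin (derivWithin f (Set.Ici 0)) (Set.Ici 0) t
      = iteratedDerivWithin 2 f (Set.Ici 0) t by
        rw [iteratedDerivWithin_succ', iteratedDerivWithin_one]] at h2
  have hexp : ∀ t : ℝ, HasDerivWithinAt (fun x => Real.exp (-b * x))
      (Real.exp (-b * t) * -b) (Set.Ici 0) t := by
    intro t
    simpa using (((hasDerivAt_id t).const_mul (-b)).exp).hasDerivWithinAt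
  have key := nonpos_of_second_deriv_ge (M := M) hc
    (g := fun t => f t - K * Real.exp (-b * t))
    (fun t ht => (hd t ht).sub ((hexp t).const_mul K))
    (fun t ht => (hdd t ht).sub (((hexp t).mul_const (-b)).const_mul K))
    (fun t ht => by
      have h := mul_le_mul_of_nonneg_right hKB (Real.exp_pos (-b * t)).le
      linarith [hineq t ht])
    (fun t ht => by
      have h := mul_nonneg hK0 (Real.exp_pos (-b * t)).le
      linarith [le_abs_self (f t), hM t ht])
    (by
      simp only [mul_zero, Real.exp_zero, mul_one]
      linarith [le_max_left (f 0) 0])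
    hτ
  linarith
end

section
/- Let (M, d) be a complete metric space, let L, C, δ > 0, and let w : ℝ × ℝ → M be a map such that for every τ ≥ 0 the map t ↦ w(τ, t) is 1-periodic (w(τ, t+1) = w(τ, t)) and L-Lipschitz, and such that for all 0 ≤ τ₁ ≤ τ₂, ∫₀¹ d(w(τ₁, t), w(τ₂, t)) dt ≤ C·e^{−δτ₁}. Then there exists a 1-periodic, L-Lipschitz map z : ℝ → M such that sup_{t ∈ [0,1]} d(w(τ, t), z(t)) → 0 as τ → +∞. -/
/-!
The loops `w τ` are equi-Lipschitz, so an `L¹` bound on the distance between two of them is also a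
sup bound: a nonnegative `K`-Lipschitz `1`-periodic function `f` is at least `f s - K η` on
`[s, s + η]`, hence `f s ≤ (∫₀¹ f) / η + K η` for every `η ∈ (0, 1]`
(`le_integral_div_add_of_periodic`). Applied to `f t = dist (w τ₁ t) (w τ₂ t)` with `K = 2 L`,
`η` small and then `τ₁` large, this shows that `w` is uniformly Cauchy as `τ → ∞`
(`uniform_cauchy`). By completeness the loops converge uniformly, and the limit inherits
periodicity and the Lipschitz constant.
-/

open MeasureTheory

/-- Interpolation between the `L¹` norm and the Lipschitz constant of a periodic function. The base
point `s` is arbitrary because periodicity lets the unit interval of integration start at `s`, so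
that `[s, s + η]` never leaves it. -/
theorem le_integral_div_add_of_periodic {f : ℝ → ℝ} {K η : ℝ} (hf : Continuous f)
    (hf0 : ∀ t, 0 ≤ f t) (hper : Function.Periodic f 1) (hK : 0 ≤ K)
    (hlip : ∀ s t, f s ≤ f t + K * |s - t|) (hη : 0 < η) (hη1 : η ≤ 1) (s : ℝ) :
    f s ≤ (∫ t in (0:ℝ)..1, f t) / η + K * η := by
  have hshift : ∫ t in s..s + 1, f t = ∫ t in (0:ℝ)..1, f t := by
    simpa using hper.intervalIntegral_add_eq s 0
  have hsub : ∫ t in s..s + η, f t ≤ ∫ t in s..s + 1, f t :=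
    intervalIntegral.integral_mono_interval le_rfl (by linarith) (by linarith)
      (Filter.Eventually.of_forall hf0) (hf.intervalIntegrable _ _)
  have hlow : ∫ _t in s..s + η, (f s - K * η) ≤ ∫ t in s..s + η, f t := by
    refine intervalIntegral.integral_mono_on (by linarith)
      (continuous_const.intervalIntegrable _ _) (hf.intervalIntegrable _ _) fun t ht => ?_
    have habs : |s - t| ≤ η := abs_le.2 ⟨by linarith [ht.2], by linarith [ht.1]⟩
    linarith [hlip s t, mul_le_mul_of_nonneg_left habs hK]
  rw [intervalIntegral.integral_const, smul_eq_mul, add_sub_cancel_left] at hlow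
  have hdiv : f s - K * η ≤ (∫ t in (0:ℝ)..1, f t) / η := by
    rw [le_div_iff₀ hη]
    linarith
  linarith

/-- Uniformity is over all base points `t : ℝ`, not only over a fundamental domain. -/
theorem uniform_cauchy {M : Type*} [MetricSpace M]
    (L C δ : ℝ) (hL : 0 < L) (hδ : 0 < δ) (w : ℝ → ℝ → M)
    (hper : ∀ τ : ℝ, 0 ≤ τ → ∀ t : ℝ, w τ (t + 1) = w τ t)
    (hlip : ∀ τ : ℝ, 0 ≤ τ → LipschitzWith (Real.toNNReal L) (w τ))
    (hint : ∀ τ₁ τ₂ : ℝ, 0 ≤ τ₁ → τ₁ ≤ τ₂ →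
      (∫ t in (0:ℝ)..1, dist (w τ₁ t) (w τ₂ t)) ≤ C * Real.exp (-δ * τ₁))
    {ε : ℝ} (hε : 0 < ε) :
    ∃ T : ℝ, 0 ≤ T ∧ ∀ τ₁ τ₂ : ℝ, T ≤ τ₁ → τ₁ ≤ τ₂ → ∀ t, dist (w τ₁ t) (w τ₂ t) ≤ ε := by
  -- The choice of `η` makes the Lipschitz error `2 L η` at most `ε / 2`.
  obtain ⟨η, hη, hη1, hηε⟩ : ∃ η : ℝ, 0 < η ∧ η ≤ 1 ∧ 2 * L * η ≤ ε / 2 := by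
    refine ⟨min 1 (ε / (4 * L)), by positivity, min_le_left _ _, ?_⟩
    calc 2 * L * min 1 (ε / (4 * L)) ≤ 2 * L * (ε / (4 * L)) := by
          gcongr
          exact min_le_right _ _
      _ = ε / 2 := by field_simp; ring
  have hlim : Filter.Tendsto (fun τ : ℝ => C * Real.exp (-δ * τ)) Filter.atTop (nhds 0) := by
    have h : Filter.Tendsto (fun τ : ℝ => -δ * τ) Filter.atTop Filter.atBot :=
      Filter.tendsto_id.const_mul_atTop_of_neg (neg_lt_zero.2 hδ)
    simpa using (Real.tendsto_exp_atBot.comp h).const_mul C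
  obtain ⟨T, hT⟩ := Filter.eventually_atTop.1
    (hlim.eventually (gt_mem_nhds (show 0 < ε / 2 * η by positivity)))
  refine ⟨max T 0, le_max_right _ _, fun τ₁ τ₂ h₁ h₂ t => ?_⟩
  have h₁0 : 0 ≤ τ₁ := (le_max_right _ _).trans h₁
  have h₂0 : 0 ≤ τ₂ := h₁0.trans h₂
  have hd : ∀ τ, 0 ≤ τ → ∀ a b, dist (w τ a) (w τ b) ≤ L * |a - b| := fun τ hτ a b => by
    simpa [Real.coe_toNNReal L hL.le, Real.dist_eq] using (hlip τ hτ).dist_le_mul a b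
  have key := le_integral_div_add_of_periodic (f := fun t => dist (w τ₁ t) (w τ₂ t))
    (K := 2 * L) ((hlip τ₁ h₁0).continuous.dist (hlip τ₂ h₂0).continuous)
    (fun _ => dist_nonneg) (fun a => by simp only [hper τ₁ h₁0, hper τ₂ h₂0])
    (by positivity)
    (fun a b => by
      have h4 := dist_triangle4 (w τ₁ a) (w τ₁ b) (w τ₂ b) (w τ₂ a)
      have e₁ := hd τ₁ h₁0 a b
      have e₂ := hd τ₂ h₂0 a b
      rw [dist_comm] at e₂
      linarith) hη hη1 t
  have hsmall : (∫ t in (0:ℝ)..1, dist (w τ₁ t) (w τ₂ t)) / η ≤ ε / 2 := by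
    rw [div_le_iff₀ hη]
    exact (hint τ₁ τ₂ h₁0 h₂).trans (hT τ₁ ((le_max_left _ _).trans h₁)).le
  linarith

/-- Analytic core of Proposition 10.1 (C⁰ convergence at a cylindrical end):
if the loops `w(τ,·)` in a complete metric space are uniformly `L`-Lipschitz,
1-periodic, and the slice-wise integrated distance between loops decays
exponentially, then `w(τ,·)` converges uniformly on `[0,1]` to a 1-periodic
`L`-Lipschitz loop `z`. -/
theorem C0_convergence_to_loop {M : Type*} [MetricSpace M] [CompleteSpace M]
    (L C δ : ℝ) (hL : 0 < L) (hC : 0 < C) (hδ : 0 < δ)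
    (w : ℝ → ℝ → M)
    (hper : ∀ τ : ℝ, 0 ≤ τ → ∀ t : ℝ, w τ (t + 1) = w τ t)
    (hlip : ∀ τ : ℝ, 0 ≤ τ → LipschitzWith (Real.toNNReal L) (w τ))
    (hint : ∀ τ₁ τ₂ : ℝ, 0 ≤ τ₁ → τ₁ ≤ τ₂ →
      (∫ t in (0:ℝ)..1, dist (w τ₁ t) (w τ₂ t)) ≤ C * Real.exp (-δ * τ₁)) :
    ∃ z : ℝ → M, (∀ t : ℝ, z (t + 1) = z t) ∧ LipschitzWith (Real.toNNReal L) z ∧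
      ∀ ε > (0:ℝ), ∃ τ₀ : ℝ, ∀ τ ≥ τ₀, ∀ t ∈ Set.Icc (0:ℝ) 1,
        dist (w τ t) (z t) ≤ ε := by
  have huc := fun {ε : ℝ} (hε : 0 < ε) => uniform_cauchy L C δ hL hδ w hper hlip hint hε
  have hconv : ∀ t, ∃ x, Filter.Tendsto (fun τ => w τ t) Filter.atTop (nhds x) := fun t => by
    refine cauchySeq_tendsto_of_complete (Metric.cauchySeq_iff'.2 fun ε hε => ?_)
    obtain ⟨T, -, hT⟩ := huc (half_pos hε)
    refine ⟨T, fun τ hτ => ?_⟩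
    rw [dist_comm]
    exact (hT T τ le_rfl hτ t).trans_lt (half_lt_self hε)
  choose z hz using hconv
  have hpos : ∀ᶠ τ : ℝ in Filter.atTop, 0 ≤ τ := Filter.eventually_ge_atTop 0
  refine ⟨z, fun t => ?_, LipschitzWith.of_dist_le_mul fun a b => ?_, fun ε hε => ?_⟩
  · refine tendsto_nhds_unique (hz (t + 1)) ((hz t).congr' ?_)
    filter_upwards [hpos] with τ hτ using (hper τ hτ t).symm
  · refine le_of_tendsto ((hz a).dist (hz b)) ?_
    filter_upwards [hpos] with τ hτ using (hlip τ hτ).dist_le_mul a b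
  · obtain ⟨T, -, hT⟩ := huc hε
    refine ⟨T, fun τ hτ t _ => le_of_tendsto (tendsto_const_nhds.dist (hz t)) ?_⟩
    filter_upwards [Filter.eventually_ge_atTop τ] with σ hσ using hT τ σ hτ hσ t
end

section
/- Let c > 0, k₀ ∈ ℕ, and let x : ℕ → ℝ be a bounded sequence of nonnegative real numbers such that x_k ≤ γ(c)·(x_{k-1} + x_{k+1}) for every k ≥ k₀ + 1, where γ(r) := 1/(e^r + e^{−r}). Then there exists a constant A > 0 such that x_k ≤ A·e^{−ck} for all k ≥ 0. -/
/-!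
With `q = e^{-c}`, the second-order inequality factors through the first-order difference
`d k = x (k + 1) - q * x k`: it says exactly that `d (k + 1) ≥ e^c * d k` for `k ≥ k₀`. A positive
value of `d` beyond `k₀` would therefore force exponential growth of `d`, contradicting boundedness
of `x`. Hence `x (k + 1) ≤ q * x k` for all `k ≥ k₀`, which is the claimed decay; the finitely many
earlier terms are absorbed into the constant.
-/

/-- Eventually-satisfied variant of the infinite three-interval lemma: if a
bounded nonnegative sequence satisfies `x k ≤ γ(c)(x (k-1) + x (k+1))` for all
`k ≥ k₀ + 1`, where `γ(r) = 1/(e^r + e^{-r})`, then there is a constant `A > 0`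
with `x k ≤ A e^{-ck}` for all `k`. -/
theorem three_interval_lemma_eventually (c : ℝ) (hc : 0 < c) (k₀ : ℕ)
    (x : ℕ → ℝ) (hx : ∀ k, 0 ≤ x k) (hbdd : ∃ B : ℝ, ∀ k, x k ≤ B)
    (hrec : ∀ k, k₀ + 1 ≤ k →
      x k ≤ (1 / (Real.exp c + Real.exp (-c))) * (x (k - 1) + x (k + 1))) :
    ∃ A > (0:ℝ), ∀ k : ℕ, x k ≤ A * Real.exp (-(c * k)) := by
  obtain ⟨B, hB⟩ := hbdd
  have hB0 : 0 ≤ B := (hx 0).trans (hB 0)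
  have hE : 1 < Real.exp c := Real.one_lt_exp_iff.mpr hc
  have hq : 0 < Real.exp (-c) := Real.exp_pos _
  have hEq : Real.exp c * Real.exp (-c) = 1 := by rw [← Real.exp_add]; simp
  have hstep : ∀ k, k₀ ≤ k → Real.exp c * (x (k + 1) - Real.exp (-c) * x k) ≤
      x (k + 2) - Real.exp (-c) * x (k + 1) := by
    intro k hk
    have h := hrec (k + 1) (by omega)
    rw [one_div_mul_eq_div, le_div_iff₀ (by positivity)] at h
    simp only [Nat.add_sub_cancel] at h
    linear_combination h - x k * hEq
  have hdec : ∀ k, k₀ ≤ k → x (k + 1) ≤ Real.exp (-c) * x k := by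
    intro k hk
    by_contra! hcon
    have hpos : 0 < x (k + 1) - Real.exp (-c) * x k := sub_pos.mpr hcon
    have hgrow : ∀ n : ℕ, Real.exp c ^ n * (x (k + 1) - Real.exp (-c) * x k) ≤
        x (k + n + 1) - Real.exp (-c) * x (k + n) := by
      intro n
      induction n with
      | zero => simp
      | succ n ih =>
        have h1 := mul_le_mul_of_nonneg_left ih (Real.exp_pos c).le
        rw [← mul_assoc, ← pow_succ'] at h1
        exact h1.trans (hstep (k + n) (by omega))
    obtain ⟨n, hn⟩ := pow_unbounded_of_one_lt (B / (x (k + 1) - Real.exp (-c) * x k)) hE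
    rw [div_lt_iff₀ hpos] at hn
    have := hgrow n
    have := hB (k + n + 1)
    have := mul_nonneg hq.le (hx (k + n))
    linarith
  refine ⟨(B + 1) * Real.exp (c * k₀), by positivity, fun k => ?_⟩
  have hinit : ∀ j : ℕ, j ≤ k₀ →
      x j ≤ (B + 1) * Real.exp (c * k₀) * Real.exp (-(c * j)) := by
    intro j hj
    have hj' : (j : ℝ) ≤ k₀ := by exact_mod_cast hj
    rw [mul_assoc, ← Real.exp_add]
    have h1 : 1 ≤ Real.exp (c * k₀ + -(c * j)) := Real.one_le_exp (by nlinarith)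
    nlinarith [hB j]
  induction k with
  | zero => exact hinit 0 (Nat.zero_le _)
  | succ k ih =>
    rcases Nat.lt_or_ge k k₀ with h | h
    · exact hinit (k + 1) h
    · calc x (k + 1) ≤ Real.exp (-c) * x k := hdec k h
        _ ≤ Real.exp (-c) * ((B + 1) * Real.exp (c * k₀) * Real.exp (-(c * k))) := by gcongr
        _ = (B + 1) * Real.exp (c * k₀) * Real.exp (-(c * (k + 1 : ℕ))) := by
          rw [show -(c * ((k + 1 : ℕ) : ℝ)) = -c + -(c * k) by push_cast; ring, Real.exp_add]
          ring
end
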